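/- (Finite-dimensional Gaussian ESJD and acceptance-rate formulae.) Let d ≥ 1, λ > 0, let X ∼ N(0, I_d) and Z ∼ N(0, I_d) be independent, and let B be a real random variable independent of (X, Z) with a Lebesgue density ρ satisfying ρ(b) = e^{−b} ρ(−b) (for example B ∼ N(−σ², 2σ²)). Write L(x) = −‖x‖²/2 for the log-density of N(0, I_d) up to an additive constant. Then E[ ‖λZ‖² · min(1, exp(L(X + λZ) − L(X) + B)) ] = 2 λ² · E[ ‖Z‖² · Φ( −(λ/2)‖Z‖ + B/(λ‖Z‖) ) ] and E[ min(1, exp(L(X + λZ) − L(X) + B)) ] = 2 · E[ Φ( −(λ/2)‖Z‖ + B/(λ‖Z‖) ) ], where Φ is the standard normal cumulative distribution function and ‖·‖ the Euclidean norm on ℝ^d. -/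

import Mathlib

open MeasureTheory ProbabilityTheory Real

/-- The standard normal cumulative distribution function `Φ`. -/
noncomputable def stdNormalCDF (x : ℝ) : ℝ :=
  ∫ t in Set.Iic x, Real.exp (-t ^ 2 / 2) / Real.sqrt (2 * Real.pi)

/-- The standard Gaussian measure `N(0, I_d)` on `ℝ^d`. -/
noncomputable def stdGaussian (d : ℕ) : Measure (Fin d → ℝ) :=
  Measure.pi fun _ : Fin d => gaussianReal 0 1

lemma aux_pdf (t : ℝ) : Real.exp (-t ^ 2 / 2) / Real.sqrt (2 * Real.pi) = gaussianPDFReal 0 1 t := by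
  simp [gaussianPDFReal, div_eq_inv_mul]

lemma aux_cdf (x : ℝ) : stdNormalCDF x = ∫ t in Set.Iic x, gaussianPDFReal 0 1 t := by
  simp only [stdNormalCDF, aux_pdf]

lemma aux_cdf' (x : ℝ) : stdNormalCDF x = cdf (gaussianReal 0 1) x := by
  rw [aux_cdf, cdf_eq_real, measureReal_def, gaussianReal_apply_eq_integral _ one_ne_zero,
    ENNReal.toReal_ofReal]
  exact integral_nonneg (fun _ => gaussianPDFReal_nonneg _ _ _)

lemma aux_meas : Measurable stdNormalCDF := by
  have : stdNormalCDF = cdf (gaussianReal 0 1) := funext aux_cdf'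
  rw [this]
  exact (monotone_cdf _).measurable

lemma aux_nonneg (x : ℝ) : 0 ≤ stdNormalCDF x := by rw [aux_cdf']; exact cdf_nonneg _ _

lemma aux_le_one (x : ℝ) : stdNormalCDF x ≤ 1 := by rw [aux_cdf']; exact cdf_le_one _ _

lemma aux_one_dim (s b : ℝ) (hs : 0 < s) :
    ∫ y, min 1 (Real.exp (s * y - s ^ 2 / 2 + b)) ∂(gaussianReal 0 1) =
      stdNormalCDF (-(s / 2) + b / s) + Real.exp b * stdNormalCDF (-(s / 2) + (-b) / s) := by
  rw [integral_gaussianReal_eq_integral_smul one_ne_zero]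
  have hint : Integrable (fun y => gaussianPDFReal 0 1 y • min 1 (Real.exp (s * y - s ^ 2 / 2 + b))) := by
    refine Integrable.mul_bdd (c := 1) (integrable_gaussianPDFReal 0 1) ?_ ?_
    · exact Measurable.aestronglyMeasurable (by fun_prop)
    · refine ae_of_all _ fun y => ?_
      rw [Real.norm_eq_abs, abs_of_nonneg (le_min zero_le_one (Real.exp_pos _).le)]
      exact min_le_left _ _
  set c := s / 2 - b / s with hc
  have hsc : s * c = s ^ 2 / 2 - b := by rw [hc]; field_simp
  rw [← integral_add_compl (measurableSet_Iic (a := c)) hint, add_comm]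
  congr 1
  · rw [Set.compl_Iic, aux_cdf]
    have h1 : -(s / 2) + b / s = -c := by rw [hc]; ring
    have h2 := integral_comp_neg_Ioi (c := c) (gaussianPDFReal 0 1)
    rw [h1, ← h2]
    refine setIntegral_congr_fun measurableSet_Ioi fun y hy => ?_
    have hy' : c < y := hy
    have : 1 ≤ Real.exp (s * y - s ^ 2 / 2 + b) := by
      apply Real.one_le_exp
      nlinarith
    simp only [min_eq_left this, smul_eq_mul, mul_one]
    simp [gaussianPDFReal]
  · rw [aux_cdf, ← integral_const_mul]
    have h1 : -(s / 2) + (-b) / s = c - s := by rw [hc]; ring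
    rw [h1, ← integral_indicator measurableSet_Iic, ← integral_indicator measurableSet_Iic,
      
      ← integral_sub_right_eq_self (μ := volume) (Set.indicator (Set.Iic (c - s)) _) s]
    congr 1
    ext y
    by_cases hy : y ≤ c
    · rw [Set.indicator_of_mem (by simpa using hy), Set.indicator_of_mem (by simpa using hy)]
      have : Real.exp (s * y - s ^ 2 / 2 + b) ≤ 1 := by
        apply Real.exp_le_one_iff.2
        nlinarith
      rw [min_eq_right this, ← aux_pdf, ← aux_pdf, smul_eq_mul, div_mul_eq_mul_div, ← Real.exp_add,
        mul_div_assoc', ← Real.exp_add]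
      congr 2
      ring
    · rw [Set.indicator_of_notMem (by simpa using hy), Set.indicator_of_notMem (by simpa using hy)]

lemma aux_B (ρ : ℝ → ℝ) (hρ_meas : Measurable ρ) (hρ_nonneg : ∀ b, 0 ≤ ρ b)
    (hρ_sym : ∀ b, ρ b = Real.exp (-b) * ρ (-b)) (f : ℝ → ℝ) :
    ∫ b, Real.exp b * f (-b) ∂(volume.withDensity fun b => ENNReal.ofReal (ρ b)) =
      ∫ b, f b ∂(volume.withDensity fun b => ENNReal.ofReal (ρ b)) := by
  rw [integral_withDensity_eq_integral_toReal_smul (by fun_prop) (by simp),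
    integral_withDensity_eq_integral_toReal_smul (by fun_prop) (by simp),
    ← integral_neg_eq_self (μ := volume) (fun b => (ENNReal.ofReal (ρ b)).toReal • f b)]
  congr 1
  ext b
  rw [ENNReal.toReal_ofReal (hρ_nonneg _), ENNReal.toReal_ofReal (hρ_nonneg _), hρ_sym b,
    smul_eq_mul, smul_eq_mul, Real.exp_neg]
  field_simp

lemma aux_map (d : ℕ) (u : Fin d → ℝ) (hu : ∑ i, u i ^ 2 = 1) :
    (_root_.stdGaussian d).map (fun x => ∑ i, x i * u i) = gaussianReal 0 1 := by
  set T : StrongDual ℝ (EuclideanSpace ℝ (Fin d)) := innerSL ℝ (WithLp.toLp 2 u) with hT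
  have hn : ‖T‖ = 1 := by
    rw [hT, innerSL_apply_norm, EuclideanSpace.norm_eq]
    simp [hu]
  have h := IsGaussian.map_eq_gaussianReal (μ := ProbabilityTheory.stdGaussian (EuclideanSpace ℝ (Fin d))) T
  rw [integral_strongDual_stdGaussian, variance_dual_stdGaussian, hn, ← map_pi_eq_stdGaussian,
    Measure.map_map (by fun_prop) (by fun_prop)] at h
  have e : (fun x : Fin d → ℝ => ∑ i, x i * u i) = T ∘ WithLp.toLp 2 := by
    ext x
    simp [hT, PiLp.inner_apply]
  rw [e, _root_.stdGaussian, h]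
  simp

instance aux_prob (d : ℕ) : IsProbabilityMeasure (_root_.stdGaussian d) := by
  unfold _root_.stdGaussian; infer_instance

lemma aux_inner (d : ℕ) (lam : ℝ) (hlam : 0 < lam)
    (L : (Fin d → ℝ) → ℝ) (hL : ∀ x, L x = -(∑ i, x i ^ 2) / 2) (z : Fin d → ℝ)
    (hz : 0 < ∑ i, z i ^ 2) (b : ℝ) :
    ∫ x, min 1 (Real.exp (L (x + lam • z) - L x + b)) ∂(_root_.stdGaussian d) =
      stdNormalCDF (-(lam / 2) * Real.sqrt (∑ i, z i ^ 2) + b / (lam * Real.sqrt (∑ i, z i ^ 2))) +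
      Real.exp b * stdNormalCDF (-(lam / 2) * Real.sqrt (∑ i, z i ^ 2) +
        (-b) / (lam * Real.sqrt (∑ i, z i ^ 2))) := by
  set r := Real.sqrt (∑ i, z i ^ 2) with hr
  have hr0 : 0 < r := Real.sqrt_pos.2 hz
  have hr2 : r ^ 2 = ∑ i, z i ^ 2 := Real.sq_sqrt hz.le
  have hu : ∑ i, (-(z i / r)) ^ 2 = 1 := by
    simp only [neg_sq, div_pow, ← Finset.sum_div, ← hr2]
    field_simp
  have h := aux_one_dim (lam * r) b (by positivity)
  rw [← aux_map d _ hu, integral_map (Measurable.aemeasurable (by fun_prop)) (Measurable.aestronglyMeasurable (by fun_prop))] at h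
  rw [show -(lam / 2) * r = -(lam * r / 2) by ring, ← h]
  congr 1
  ext x
  congr 3
  have e1 : ∑ i, (x + lam • z) i ^ 2 = ∑ i, x i ^ 2 + 2 * lam * ∑ i, x i * z i + lam ^ 2 * r ^ 2 := by
    rw [hr2, Finset.mul_sum, Finset.mul_sum, ← Finset.sum_add_distrib, ← Finset.sum_add_distrib]
    refine Finset.sum_congr rfl fun i _ => ?_
    simp; ring
  have e2 : ∑ i, x i * -(z i / r) = -(∑ i, x i * z i) / r := by
    rw [neg_div, Finset.sum_div, ← Finset.sum_neg_distrib]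
    refine Finset.sum_congr rfl fun i _ => ?_
    ring
  rw [hL, hL, e1, e2]
  field_simp
  ring

lemma aux_measL (d : ℕ) (L : (Fin d → ℝ) → ℝ) (hL : ∀ x, L x = -(∑ i, x i ^ 2) / 2) :
    Measurable L := by
  rw [show L = fun x => -(∑ i, x i ^ 2) / 2 from funext hL]
  fun_prop

lemma aux_z (d : ℕ) (lam : ℝ) (hlam : 0 < lam)
    (ρ : ℝ → ℝ) (hρ_meas : Measurable ρ) (hρ_nonneg : ∀ b, 0 ≤ ρ b)
    (μB : Measure ℝ)
    (hμB : μB = volume.withDensity fun b => ENNReal.ofReal (ρ b))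
    (hμB_prob : IsProbabilityMeasure μB)
    (hρ_sym : ∀ b, ρ b = Real.exp (-b) * ρ (-b))
    (L : (Fin d → ℝ) → ℝ) (hL : ∀ x, L x = -(∑ i, x i ^ 2) / 2) (z : Fin d → ℝ)
    (hz : 0 < ∑ i, z i ^ 2) :
    ∫ x, ∫ b, min 1 (Real.exp (L (x + lam • z) - L x + b)) ∂μB ∂(_root_.stdGaussian d) =
      ∫ _x, ∫ b, 2 * stdNormalCDF (-(lam / 2) * Real.sqrt (∑ i, z i ^ 2) +
        b / (lam * Real.sqrt (∑ i, z i ^ 2))) ∂μB ∂(_root_.stdGaussian d) := by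
  have hLm := aux_measL d L hL
  have hΦ := aux_meas
  have hbd : ∀ t : ℝ, ‖min 1 (Real.exp t)‖ ≤ 1 := fun t => by
    rw [Real.norm_eq_abs, abs_of_nonneg (le_min zero_le_one (Real.exp_pos _).le)]
    exact min_le_left _ _
  have hi : Integrable (Function.uncurry fun x b => min 1 (Real.exp (L (x + lam • z) - L x + b)))
      ((_root_.stdGaussian d).prod μB) := by
    refine Integrable.of_bound (C := 1) (Measurable.aestronglyMeasurable ?_) (ae_of_all _ fun p => hbd _)
    simp only [Function.uncurry_def]
    fun_prop
  rw [integral_integral_swap hi]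
  simp only [aux_inner d lam hlam L hL z hz, integral_const, probReal_univ, one_smul]
  have hi2 := hi.integral_prod_right
  simp only [Function.uncurry_apply_pair, aux_inner d lam hlam L hL z hz] at hi2
  have hi1 : Integrable (fun b => stdNormalCDF (-(lam / 2) * Real.sqrt (∑ i, z i ^ 2) +
        b / (lam * Real.sqrt (∑ i, z i ^ 2)))) μB := by
    refine Integrable.of_bound (C := 1) (Measurable.aestronglyMeasurable ?_) (ae_of_all _ fun p => ?_)
    · fun_prop
    · rw [Real.norm_eq_abs, abs_of_nonneg (aux_nonneg _)]
      exact aux_le_one _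
  have hi3 := hi2.sub hi1
  simp only [Pi.sub_def, add_sub_cancel_left] at hi3
  rw [integral_add hi1 hi3, integral_const_mul, two_mul]
  congr 1
  have h := aux_B ρ hρ_meas hρ_nonneg hρ_sym (fun b => stdNormalCDF (-(lam / 2) *
    Real.sqrt (∑ i, z i ^ 2) + b / (lam * Real.sqrt (∑ i, z i ^ 2))))
  rw [← hμB] at h
  exact h

lemma aux_fubini (d : ℕ) (μB : Measure ℝ) (hμB_prob : IsProbabilityMeasure μB)
    (g : (Fin d → ℝ) → ℝ) (hg : Integrable g (_root_.stdGaussian d))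
    (h : ((Fin d → ℝ) × (Fin d → ℝ)) × ℝ → ℝ) (hm : Measurable h) (hb : ∀ p, ‖h p‖ ≤ 2) :
    ∫ p, g p.1.2 * h p ∂(((_root_.stdGaussian d).prod (_root_.stdGaussian d)).prod μB) =
      ∫ z, g z * ∫ x, ∫ b, h ((x, z), b) ∂μB ∂(_root_.stdGaussian d) ∂(_root_.stdGaussian d) := by
  have hi : Integrable (fun p : ((Fin d → ℝ) × (Fin d → ℝ)) × ℝ => g p.1.2 * h p)
      (((_root_.stdGaussian d).prod (_root_.stdGaussian d)).prod μB) := by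
    refine Integrable.mul_bdd (c := 2) ?_ hm.aestronglyMeasurable (ae_of_all _ hb)
    exact (hg.comp_snd (_root_.stdGaussian d)).comp_fst μB
  rw [integral_prod _ hi, integral_prod_symm _ hi.integral_prod_left]
  simp only [integral_const_mul]

lemma aux_ae (d : ℕ) (hd : 1 ≤ d) : ∀ᵐ z ∂(_root_.stdGaussian d), 0 < ∑ i, z i ^ 2 := by
  have h : ∀ᵐ z ∂(_root_.stdGaussian d), z ⟨0, hd⟩ ≠ 0 := by
    have : NullSingletonClass (gaussianReal 0 1) := nullSingletonClass_gaussianReal one_ne_zero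
    have := Measure.pi_hyperplane (fun _ : Fin d => gaussianReal 0 1) ⟨0, hd⟩ 0
    rw [ae_iff]
    simpa [_root_.stdGaussian] using this
  filter_upwards [h] with z hz
  exact Finset.sum_pos' (fun i _ => sq_nonneg _) ⟨⟨0, hd⟩, Finset.mem_univ _, by positivity⟩

lemma aux_sq (d : ℕ) : Integrable (fun z : Fin d → ℝ => ∑ i, z i ^ 2) (_root_.stdGaussian d) := by
  refine integrable_finsetSum _ fun i _ => ?_
  have h : Integrable (fun t : ℝ => t ^ 2) (gaussianReal 0 1) :=
    (memLp_id_gaussianReal (μ := 0) (v := 1) 2).integrable_sq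
  exact integrable_comp_eval (μ := fun _ : Fin d => gaussianReal 0 1) (i := i) h

lemma aux_main (d : ℕ) (hd : 1 ≤ d) (lam : ℝ) (hlam : 0 < lam)
    (ρ : ℝ → ℝ) (hρ_meas : Measurable ρ) (hρ_nonneg : ∀ b, 0 ≤ ρ b)
    (μB : Measure ℝ)
    (hμB : μB = volume.withDensity fun b => ENNReal.ofReal (ρ b))
    (hμB_prob : IsProbabilityMeasure μB)
    (hρ_sym : ∀ b, ρ b = Real.exp (-b) * ρ (-b))
    (L : (Fin d → ℝ) → ℝ) (hL : ∀ x, L x = -(∑ i, x i ^ 2) / 2)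
    (g : (Fin d → ℝ) → ℝ) (hg : Integrable g (_root_.stdGaussian d)) :
    (∫ p : ((Fin d → ℝ) × (Fin d → ℝ)) × ℝ,
        g p.1.2 * min 1 (Real.exp (L (p.1.1 + lam • p.1.2) - L p.1.1 + p.2))
        ∂(((_root_.stdGaussian d).prod (_root_.stdGaussian d)).prod μB)) =
      ∫ p : ((Fin d → ℝ) × (Fin d → ℝ)) × ℝ,
        g p.1.2 * (2 * stdNormalCDF (-(lam / 2) * Real.sqrt (∑ i, p.1.2 i ^ 2) +
            p.2 / (lam * Real.sqrt (∑ i, p.1.2 i ^ 2))))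
        ∂(((_root_.stdGaussian d).prod (_root_.stdGaussian d)).prod μB) := by
  have hLm := aux_measL d L hL
  have hΦ := aux_meas
  rw [aux_fubini d μB hμB_prob g hg
      (fun p => min 1 (Real.exp (L (p.1.1 + lam • p.1.2) - L p.1.1 + p.2))) (by fun_prop) ?_,
    aux_fubini d μB hμB_prob g hg
      (fun p => 2 * stdNormalCDF (-(lam / 2) * Real.sqrt (∑ i, p.1.2 i ^ 2) +
            p.2 / (lam * Real.sqrt (∑ i, p.1.2 i ^ 2)))) (by fun_prop) ?_]
  · refine integral_congr_ae ?_
    filter_upwards [aux_ae d hd] with z hz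
    have := aux_z d lam hlam ρ hρ_meas hρ_nonneg μB hμB hμB_prob hρ_sym L hL z hz
    simp only [this]
  · intro p
    rw [Real.norm_eq_abs, abs_of_nonneg (mul_nonneg zero_le_two (aux_nonneg _))]
    linarith [aux_le_one (-(lam / 2) * Real.sqrt (∑ i, p.1.2 i ^ 2) +
            p.2 / (lam * Real.sqrt (∑ i, p.1.2 i ^ 2)))]
  · intro p
    rw [Real.norm_eq_abs, abs_of_nonneg (le_min zero_le_one (Real.exp_pos _).le)]
    exact (min_le_left _ _).trans one_le_two

/-- finite-dimensional Gaussian ESJD and acceptance-rate formulae.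
With `X, Z ∼ N(0, I_d)` independent, `B` independent with density `ρ` satisfying
`ρ(b) = e^{−b} ρ(−b)`, and `L(x) = −‖x‖²/2`:
`E[‖λZ‖² min(1, exp(L(X+λZ) − L(X) + B))] = 2λ² E[‖Z‖² Φ(−(λ/2)‖Z‖ + B/(λ‖Z‖))]`
and `E[min(1, exp(L(X+λZ) − L(X) + B))] = 2 E[Φ(−(λ/2)‖Z‖ + B/(λ‖Z‖))]`. -/
theorem stmt19 (d : ℕ) (hd : 1 ≤ d) (lam : ℝ) (hlam : 0 < lam)
    (ρ : ℝ → ℝ) (hρ_meas : Measurable ρ) (hρ_nonneg : ∀ b, 0 ≤ ρ b)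
    (μB : Measure ℝ)
    (hμB : μB = volume.withDensity fun b => ENNReal.ofReal (ρ b))
    (hμB_prob : IsProbabilityMeasure μB)
    (hρ_sym : ∀ b, ρ b = Real.exp (-b) * ρ (-b))
    (L : (Fin d → ℝ) → ℝ) (hL : ∀ x, L x = -(∑ i, x i ^ 2) / 2) :
    (∫ p : ((Fin d → ℝ) × (Fin d → ℝ)) × ℝ,
        (∑ i, (lam * p.1.2 i) ^ 2) *
          min 1 (Real.exp (L (p.1.1 + lam • p.1.2) - L p.1.1 + p.2))
        ∂(((stdGaussian d).prod (stdGaussian d)).prod μB)) =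
      2 * lam ^ 2 * ∫ p : ((Fin d → ℝ) × (Fin d → ℝ)) × ℝ,
        (∑ i, p.1.2 i ^ 2) *
          stdNormalCDF (-(lam / 2) * Real.sqrt (∑ i, p.1.2 i ^ 2) +
            p.2 / (lam * Real.sqrt (∑ i, p.1.2 i ^ 2)))
        ∂(((stdGaussian d).prod (stdGaussian d)).prod μB) ∧
    (∫ p : ((Fin d → ℝ) × (Fin d → ℝ)) × ℝ,
        min 1 (Real.exp (L (p.1.1 + lam • p.1.2) - L p.1.1 + p.2))
        ∂(((stdGaussian d).prod (stdGaussian d)).prod μB)) =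
      2 * ∫ p : ((Fin d → ℝ) × (Fin d → ℝ)) × ℝ,
        stdNormalCDF (-(lam / 2) * Real.sqrt (∑ i, p.1.2 i ^ 2) +
          p.2 / (lam * Real.sqrt (∑ i, p.1.2 i ^ 2)))
        ∂(((stdGaussian d).prod (stdGaussian d)).prod μB) := by
  constructor
  · have h := aux_main d hd lam hlam ρ hρ_meas hρ_nonneg μB hμB hμB_prob hρ_sym L hL
      (fun z => lam ^ 2 * ∑ i, z i ^ 2) ((aux_sq d).const_mul _)
    rw [← integral_const_mul]
    simp only [mul_pow, ← Finset.mul_sum]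
    rw [h]
    congr 1
    ext p
    ring
  · have h := aux_main d hd lam hlam ρ hρ_meas hρ_nonneg μB hμB hμB_prob hρ_sym L hL
      (fun _ => 1) (integrable_const _)
    simp only [one_mul] at h
    rw [← integral_const_mul]
    exact h
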